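/- Let K be a field of characteristic 0 equipped with a derivation D and let F be a differential subfield of K. Then the set L = {b ∈ K : b is differentially algebraic over F} is a differential subfield of K containing F; that is, L contains F, L is closed under addition, multiplication, negation, and inversion of nonzero elements, and L is closed under the derivation D. -/

import Mathlib

/-- `b ∈ K` is differentially algebraic over the differential subfield `F` of `K`:
there are `n ∈ ℕ` and a nonzero polynomial in `n + 1` variables with coefficients in `F`
vanishing at `(b, Db, …, Dⁿb)`. -/
def IsDifferentiallyAlgebraic {K : Type*} [Field K] (D : K → K) (F : Subfield K) (b : K) :
    Prop :=
  ∃ (n : ℕ) (P : MvPolynomial (Fin (n + 1)) K),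
    P ≠ 0 ∧ (∀ m, P.coeff m ∈ F) ∧
    MvPolynomial.eval (fun i : Fin (n + 1) => D^[i.val] b) P = 0

section Helpers

variable {K : Type*} [Field K]

lemma isDA_iff (D : K → K) (F : Subfield K) (b : K) :
    IsDifferentiallyAlgebraic D F b ↔
      ∃ n : ℕ, ¬ AlgebraicIndependent F (fun i : Fin (n + 1) => D^[i.val] b) := by
  constructor
  · rintro ⟨n, P, hP, hc, he⟩
    refine ⟨n, fun h => hP ?_⟩
    have hr : P ∈ Set.range (MvPolynomial.map (σ := Fin (n + 1)) (algebraMap F K)) := by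
      rw [MvPolynomial.mem_range_map_iff_coeffs_subset]
      intro c hcc
      obtain ⟨m, -, rfl⟩ := MvPolynomial.mem_coeffs_iff.1 hcc
      exact ⟨⟨_, hc m⟩, rfl⟩
    obtain ⟨Q, rfl⟩ := hr
    rw [algebraicIndependent_iff] at h
    rw [h Q (by rwa [MvPolynomial.eval_map, ← MvPolynomial.aeval_def] at he), map_zero]
  · rintro ⟨n, h⟩
    rw [algebraicIndependent_iff] at h
    push Not at h
    obtain ⟨Q, hQ, hQ0⟩ := h
    refine ⟨n, MvPolynomial.map (algebraMap F K) Q, ?_, ?_, ?_⟩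
    · intro h0
      exact hQ0 (MvPolynomial.map_injective _ (algebraMap F K).injective (by rw [h0, map_zero]))
    · intro m
      rw [MvPolynomial.coeff_map]
      exact (Q.coeff m).2
    · rwa [MvPolynomial.eval_map, ← MvPolynomial.aeval_def]

/-- iterates all algebraic over a finitely generated subfield -/
lemma isDA_of_finite (D : K → K) (F : Subfield K) (b : K) (T : Set K) (hT : T.Finite)
    (h : ∀ n, IsAlgebraic (IntermediateField.adjoin F T) (D^[n] b)) :
    IsDifferentiallyAlgebraic D F b := by
  rw [isDA_iff]
  refine ⟨T.ncard, fun hi => ?_⟩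
  have hind : (AlgebraicIndependent.matroid F K).Indep
      (Set.range (fun i : Fin (T.ncard + 1) => D^[i.val] b)) :=
    AlgebraicIndependent.matroid_indep_iff.2 hi.coe_range
  have hsub : Set.range (fun i : Fin (T.ncard + 1) => D^[i.val] b) ⊆
      (AlgebraicIndependent.matroid F K).closure T := by
    rw [AlgebraicIndependent.matroid_closure_eq]
    rintro _ ⟨i, rfl⟩
    exact IntermediateField.isAlgebraic_adjoin_iff.1 (h i)
  have h1 := hind.encard_le_eRk_of_subset hsub
  rw [Matroid.eRk_closure_eq] at h1
  have h2 := h1.trans (Matroid.eRk_le_encard _ T)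
  rw [← Set.image_univ, hi.injective.encard_image, ← hT.cast_ncard_eq, Set.encard_univ] at h2
  simp at h2
  norm_cast at h2
  omega

lemma exists_isAlgebraic_of_isDA (D : K → K) (F : Subfield K) (b : K)
    (h : IsDifferentiallyAlgebraic D F b) :
    ∃ n : ℕ, IsAlgebraic (IntermediateField.adjoin F ((fun i => D^[i] b) '' Set.Iio n))
      (D^[n] b) := by
  by_contra! hc
  rw [isDA_iff] at h
  obtain ⟨n, hn⟩ := h
  have key : ∀ m : ℕ, AlgebraicIndepOn F (fun i => D^[i] b) (Set.Iio m) := by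
    intro m
    induction m with
    | zero =>
      have : Set.Iio 0 = (∅ : Set ℕ) := by ext; simp
      rw [this]
      exact algebraicIndependent_empty_type_iff.2 (algebraMap F K).injective
    | succ m ih =>
      have : Set.Iio (m + 1) = insert m (Set.Iio m) := by ext; simp
      rw [this]
      refine ih.insert ?_
      intro ha
      exact hc m (IntermediateField.isAlgebraic_adjoin_iff.2 ha)
  exact hn ((key (n + 1)).comp (fun i : Fin (n + 1) => (⟨i.val, i.2⟩ : Set.Iio (n + 1)))
    (fun i j hij => Fin.ext (congrArg Subtype.val hij)))

lemma acl_closed [CharZero K] (D : K → K)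
    (hD_add : ∀ x y : K, D (x + y) = D x + D y)
    (hD_mul : ∀ x y : K, D (x * y) = x * D y + y * D x)
    (F : Subfield K) (hF : ∀ x ∈ F, D x ∈ F) (T : Set K)
    (hT : ∀ t ∈ T, IsAlgebraic (IntermediateField.adjoin F T) (D t)) (x : K)
    (hx : IsAlgebraic (IntermediateField.adjoin F T) x) :
    IsAlgebraic (IntermediateField.adjoin F T) (D x) := by
  have hD0 : D 0 = 0 := by simpa using hD_add 0 0
  have hD1 : D 1 = 0 := by simpa using hD_mul 1 1
  have hE : ∀ e ∈ IntermediateField.adjoin F T,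
      IsAlgebraic (IntermediateField.adjoin F T) (D e) := by
    have hm : ∀ e ∈ IntermediateField.adjoin F T,
      IsAlgebraic (IntermediateField.adjoin F T) e := fun e he =>
        isAlgebraic_algebraMap (⟨e, he⟩ : IntermediateField.adjoin F T)
    intro e he
    induction he using IntermediateField.adjoin_induction with
    | mem t ht => exact hT t ht
    | algebraMap f =>
      exact hm _ ((IntermediateField.adjoin F T).algebraMap_mem ⟨_, hF f f.2⟩)
    | add x y hx hy h1 h2 => rw [hD_add]; exact h1.add h2
    | mul x y hx hy h1 h2 =>
      rw [hD_mul]; exact ((hm x hx).mul h2).add ((hm y hy).mul h1)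
    | inv x hx h1 =>
      by_cases h0 : x = 0
      · simp only [h0, inv_zero, hD0]; exact isAlgebraic_zero
      · have h2 := hD_mul x x⁻¹
        rw [mul_inv_cancel₀ h0, hD1] at h2
        have h3 : D x⁻¹ = -(x⁻¹ * (x⁻¹ * D x)) := by
          field_simp
          field_simp at h2
          linear_combination -h2
        rw [h3]
        exact ((hm x hx).inv.mul ((hm x hx).inv.mul h1)).neg
  have hpoly : ∀ p : Polynomial (IntermediateField.adjoin F T),
      ∃ a, IsAlgebraic (IntermediateField.adjoin F T) a ∧
        D (Polynomial.aeval x p) = a + Polynomial.aeval x p.derivative * D x := by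
    intro p
    induction p using Polynomial.induction_on with
    | C c => exact ⟨_, hE c c.2, by simp⟩
    | add p q hp hq =>
      obtain ⟨a, ha, h1⟩ := hp
      obtain ⟨c, hc, h2⟩ := hq
      refine ⟨a + c, ha.add hc, ?_⟩
      simp only [map_add, hD_add, h1, h2]
      ring
    | monomial n c ih =>
      obtain ⟨a, ha, h1⟩ := ih
      refine ⟨x * a, hx.mul ha, ?_⟩
      rw [pow_succ, ← mul_assoc, map_mul, hD_mul, h1,
        Polynomial.derivative_mul (f := Polynomial.C c * Polynomial.X ^ n)]
      simp only [Polynomial.aeval_X, Polynomial.derivative_X, map_add, map_mul, map_one]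
      ring
  obtain ⟨a, ha, h1⟩ := hpoly (minpoly (IntermediateField.adjoin F T) x)
  have hsep := (minpoly.irreducible hx.isIntegral).separable.aeval_derivative_ne_zero
    (minpoly.aeval _ x)
  rw [minpoly.aeval, hD0] at h1
  have h2 : D x = -a * (Polynomial.aeval x
      (minpoly (IntermediateField.adjoin F T) x).derivative)⁻¹ := by
    field_simp
    linear_combination -h1
  rw [h2]
  refine ha.neg.mul (IsAlgebraic.inv ?_)
  exact Algebra.isAlgebraic_adjoin_singleton_iff.2 hx _
    (Polynomial.aeval_mem_adjoin_singleton (IntermediateField.adjoin F T) x)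

lemma isDA_of_acl [CharZero K] (D : K → K)
    (hD_add : ∀ x y : K, D (x + y) = D x + D y)
    (hD_mul : ∀ x y : K, D (x * y) = x * D y + y * D x)
    (F : Subfield K) (hF : ∀ x ∈ F, D x ∈ F) (T : Set K) (hfin : T.Finite)
    (hT : ∀ t ∈ T, IsAlgebraic (IntermediateField.adjoin F T) (D t)) (x : K)
    (hx : IsAlgebraic (IntermediateField.adjoin F T) x) :
    IsDifferentiallyAlgebraic D F x := by
  refine isDA_of_finite D F x T hfin fun n => ?_
  induction n with
  | zero => exact hx
  | succ n ih =>
    rw [Function.iterate_succ_apply']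
    exact acl_closed D hD_add hD_mul F hF T hT _ ih

lemma acl_mono (F : Subfield K) {S T : Set K} (hST : S ⊆ T) {x : K}
    (hx : IsAlgebraic (IntermediateField.adjoin F S) x) :
    IsAlgebraic (IntermediateField.adjoin F T) x := by
  rw [IntermediateField.isAlgebraic_adjoin_iff] at hx ⊢
  exact hx.adjoin_of_forall_isAlgebraic fun y hy => absurd (hST hy.1) hy.2

lemma exists_acl (D : K → K) (F : Subfield K) (x : K) (h : IsDifferentiallyAlgebraic D F x) :
    ∃ T : Set K, T.Finite ∧
      (∀ t ∈ T, IsAlgebraic (IntermediateField.adjoin F T) (D t)) ∧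
      IsAlgebraic (IntermediateField.adjoin F T) x := by
  obtain ⟨n, hn⟩ := exists_isAlgebraic_of_isDA D F x h
  have key : ∀ i ≤ n, IsAlgebraic
      (IntermediateField.adjoin F ((fun i => D^[i] x) '' Set.Iio n)) (D^[i] x) := by
    intro i hi
    rcases hi.eq_or_lt with rfl | hi
    · exact hn
    · exact isAlgebraic_algebraMap (⟨_, IntermediateField.subset_adjoin F _ ⟨i, hi, rfl⟩⟩ :
        IntermediateField.adjoin F ((fun i => D^[i] x) '' Set.Iio n))
  refine ⟨_, (Set.finite_Iio n).image _, ?_, key 0 (Nat.zero_le _)⟩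
  rintro _ ⟨i, hi, rfl⟩
  have := key (i + 1) hi
  rwa [Function.iterate_succ_apply'] at this

lemma exists_acl₂ (D : K → K) (F : Subfield K) (x y : K) (hx : IsDifferentiallyAlgebraic D F x)
    (hy : IsDifferentiallyAlgebraic D F y) :
    ∃ T : Set K, T.Finite ∧
      (∀ t ∈ T, IsAlgebraic (IntermediateField.adjoin F T) (D t)) ∧
      IsAlgebraic (IntermediateField.adjoin F T) x ∧
      IsAlgebraic (IntermediateField.adjoin F T) y := by
  obtain ⟨S, hS, hS1, hS2⟩ := exists_acl D F x hx
  obtain ⟨T, hT, hT1, hT2⟩ := exists_acl D F y hy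
  refine ⟨S ∪ T, hS.union hT, ?_, acl_mono F Set.subset_union_left hS2,
    acl_mono F Set.subset_union_right hT2⟩
  rintro t (ht | ht)
  · exact acl_mono F Set.subset_union_left (hS1 t ht)
  · exact acl_mono F Set.subset_union_right (hT1 t ht)

end Helpers

/-- The set `L = {b ∈ K : b is differentially algebraic over F}` is a differential
subfield of `K` containing `F`: it contains `F` and is closed under addition,
multiplication, negation, inversion of nonzero elements, and the derivation `D`. -/
theorem diffAlgebraic_elements_form_differential_subfield {K : Type*} [Field K] [CharZero K]
    (D : K → K)
    (hD_add : ∀ x y : K, D (x + y) = D x + D y)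
    (hD_mul : ∀ x y : K, D (x * y) = x * D y + y * D x)
    (F : Subfield K) (hF : ∀ x ∈ F, D x ∈ F) :
    (∀ x ∈ F, IsDifferentiallyAlgebraic D F x) ∧
    (∀ x y : K, IsDifferentiallyAlgebraic D F x → IsDifferentiallyAlgebraic D F y →
      IsDifferentiallyAlgebraic D F (x + y)) ∧
    (∀ x y : K, IsDifferentiallyAlgebraic D F x → IsDifferentiallyAlgebraic D F y →
      IsDifferentiallyAlgebraic D F (x * y)) ∧
    (∀ x : K, IsDifferentiallyAlgebraic D F x → IsDifferentiallyAlgebraic D F (-x)) ∧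
    (∀ x : K, IsDifferentiallyAlgebraic D F x → x ≠ 0 → IsDifferentiallyAlgebraic D F x⁻¹) ∧
    (∀ x : K, IsDifferentiallyAlgebraic D F x → IsDifferentiallyAlgebraic D F (D x)) := by
  have main := isDA_of_acl D hD_add hD_mul F hF
  refine ⟨fun x hx => ?_, fun x y hx hy => ?_, fun x y hx hy => ?_, fun x hx => ?_,
    fun x hx _ => ?_, fun x hx => ?_⟩
  · exact main ∅ Set.finite_empty (by simp) x (isAlgebraic_algebraMap
      (⟨x, (IntermediateField.adjoin F ∅).algebraMap_mem ⟨x, hx⟩⟩ :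
        IntermediateField.adjoin F (∅ : Set K)))
  · obtain ⟨T, h1, h2, h3, h4⟩ := exists_acl₂ D F x y hx hy
    exact main T h1 h2 _ (h3.add h4)
  · obtain ⟨T, h1, h2, h3, h4⟩ := exists_acl₂ D F x y hx hy
    exact main T h1 h2 _ (h3.mul h4)
  · obtain ⟨T, h1, h2, h3⟩ := exists_acl D F x hx
    exact main T h1 h2 _ h3.neg
  · obtain ⟨T, h1, h2, h3⟩ := exists_acl D F x hx
    exact main T h1 h2 _ h3.inv
  · obtain ⟨T, h1, h2, h3⟩ := exists_acl D F x hx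
    exact main T h1 h2 _ (acl_closed D hD_add hD_mul F hF T h2 x h3)
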